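/- Let d ≥ 2 be an integer and let T = (V,E) be a critical d-dominating tournament. Then T* (the digraph obtained from T by adding a loop at every vertex) cannot be covered by fewer than d + 1 (d+1)-dominating subgraphs: there do not exist t ≤ d sets U_1,…,U_t ⊆ V with U_1 ∪ … ∪ U_t = V such that for each i the restriction of T* to U_i is (d+1)-dominating. -/

import Mathlib

/-- `E` is a tournament on `V`: loopless, and for all distinct `x,y` exactly one of
`(x,y)`, `(y,x)` is an edge. -/
def IsTournament {V : Type*} (E : V → V → Prop) : Prop :=
  (∀ x : V, ¬ E x x) ∧ ∀ x y : V, x ≠ y → (E x y ↔ ¬ E y x)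

/-- The restriction of the digraph `E` to `U` is `d`-dominating: every finite `S ⊆ U`
with `1 ≤ |S| ≤ d` has a common out-neighbor in `U`. -/
def DomOn {V : Type*} (E : V → V → Prop) (d : ℕ) (U : Set V) : Prop :=
  ∀ S : Finset V, ↑S ⊆ U → S.Nonempty → S.card ≤ d → ∃ w ∈ U, ∀ s ∈ S, E s w

/-- `T*`: the digraph obtained from `E` by adding a loop at every vertex. -/
def WithLoops {V : Type*} (E : V → V → Prop) : V → V → Prop :=
  fun x y => E x y ∨ x = y

theorem aux_sink {V : Type*} (d : ℕ) (E : V → V → Prop) (hT : IsTournament E) (U : Set V)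
    (hU : DomOn (WithLoops E) (d + 1) U) (hns : ∀ w ∈ U, ∃ u ∈ U, E w u) : DomOn E d U := by
  classical
  have hasym : ∀ x y, E x y → E y x → False := by
    intro x y h1 h2
    by_cases h : x = y
    · subst h; exact hT.1 _ h1
    · exact (hT.2 x y h).1 h1 h2
  intro S hS hne hc
  obtain ⟨w, hw, hdw⟩ := hU S hS hne (by omega)
  by_cases hwS : w ∈ S
  · obtain ⟨u, hu, hwu⟩ := hns w hw
    obtain ⟨z, hz, hdz⟩ := hU (insert u S) (by
      intro a ha
      rcases Finset.mem_insert.1 (Finset.mem_coe.1 ha) with h | h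
      · exact h ▸ hu
      · exact hS h) ⟨u, Finset.mem_insert_self _ _⟩
      ((Finset.card_insert_le _ _).trans (by omega))
    have hwz := hdz w (Finset.mem_insert_of_mem hwS)
    have huz := hdz u (Finset.mem_insert_self _ _)
    have hzw : E w z := by
      rcases hwz with h | h
      · exact h
      · subst h
        rcases huz with h | h
        · exact (hasym _ _ h hwu).elim
        · subst h; exact hwu
    refine ⟨z, hz, fun s hs => ?_⟩
    rcases hdz s (Finset.mem_insert_of_mem hs) with h | h
    · exact h
    · subst h
      rcases hdw s hs with h | h
      · exact (hasym _ _ h hzw).elim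
      · subst h; exact hzw
  · refine ⟨w, hw, fun s hs => ?_⟩
    rcases hdw s hs with h | h
    · exact h
    · subst h; exact (hwS hs).elim

theorem aux_univ {V : Type*} [Nonempty V] (d : ℕ) (hd : 2 ≤ d)
    (E : V → V → Prop) (hT : IsTournament E)
    (hdom : DomOn E d (Set.univ : Set V))
    (hcrit : ∀ U : Set V, U.Nonempty → U ≠ Set.univ → ¬ DomOn E d U) :
    ¬ DomOn (WithLoops E) (d + 1) (Set.univ : Set V) := by
  classical
  intro hU
  have hasym : ∀ x y, E x y → E y x → False := by
    intro x y h1 h2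
    by_cases h : x = y
    · subst h; exact hT.1 _ h1
    · exact (hT.2 x y h).1 h1 h2
  have hpair : ∀ x y, ∃ w, E x w ∧ E y w := by
    intro x y
    obtain ⟨w, -, hw⟩ := hdom {x, y} (Set.subset_univ _) ⟨x, by simp⟩
      (Finset.card_le_two.trans hd)
    exact ⟨w, hw x (by simp), hw y (by simp)⟩
  have v : V := Classical.arbitrary V
  obtain ⟨x0, hx0, -⟩ := hpair v v
  have hn := hcrit {v}ᶜ ⟨x0, by
    intro h
    have h : x0 = v := h
    subst h; exact hT.1 _ hx0⟩ (by
    intro h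
    have : v ∈ ({v}ᶜ : Set V) := h ▸ Set.mem_univ v
    exact this rfl)
  unfold DomOn at hn
  push Not at hn
  obtain ⟨S, hSv, hSne, hSc, hS⟩ := hn
  have huniq : ∀ z, (∀ s ∈ S, E s z) → z = v := by
    intro z hz
    by_contra hne
    obtain ⟨s, hs, h⟩ := hS z hne
    exact h (hz s hs)
  have hSdv : ∀ s ∈ S, E s v := by
    obtain ⟨z, -, hz⟩ := hdom S (Set.subset_univ _) hSne hSc
    have := huniq z hz
    subst this; exact hz
  have key : ∀ x, E v x → ∃ w ∈ S, E x w ∧ ∀ s ∈ S, E s w ∨ s = w := by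
    intro x hx
    have hxS : x ∉ S := fun h => hasym _ _ hx (hSdv x h)
    obtain ⟨w, -, hw⟩ := hU (insert x S) (Set.subset_univ _) ⟨x, Finset.mem_insert_self _ _⟩
      ((Finset.card_insert_le _ _).trans (by omega))
    have hws : ∀ s ∈ S, E s w ∨ s = w := fun s hs => hw s (Finset.mem_insert_of_mem hs)
    have hxw : E x w ∨ x = w := hw x (Finset.mem_insert_self _ _)
    by_cases hwS : w ∈ S
    · refine ⟨w, hwS, ?_, hws⟩
      rcases hxw with h | h
      · exact h
      · subst h; exact (hxS hwS).elim
    · have : w = v := huniq w fun s hs => by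
        rcases hws s hs with h | h
        · exact h
        · subst h; exact (hwS hs).elim
      subst this
      rcases hxw with h | h
      · exact (hasym _ _ h hx).elim
      · subst h; exact (hT.1 _ hx).elim
  obtain ⟨w, hwS, -, hw⟩ := key x0 hx0
  obtain ⟨x, hvx, hwx⟩ := hpair v w
  obtain ⟨w', hwS', hxw', hw'⟩ := key x hvx
  have : w' = w := by
    rcases hw w' hwS' with h | h
    · rcases hw' w hwS with h' | h'
      · exact (hasym _ _ h h').elim
      · exact h'.symm
    · exact h
  subst this
  exact hasym _ _ hwx hxw'

/-- Lemma: if `T` is a critical `d`-dominating tournament, then `T*` cannot be covered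
by fewer than `d+1` `(d+1)`-dominating subgraphs: there are no `t ≤ d` sets
`U_1, …, U_t` covering `V` whose restrictions of `T*` are all `(d+1)`-dominating. -/
theorem star_cover_lower_bound {V : Type*} [Nonempty V] (d : ℕ) (hd : 2 ≤ d)
    (E : V → V → Prop) (hT : IsTournament E)
    (hdom : DomOn E d (Set.univ : Set V))
    (hcrit : ∀ U : Set V, U.Nonempty → U ≠ Set.univ → ¬ DomOn E d U) :
    ∀ (t : ℕ) (U : Fin t → Set V), t ≤ d → (⋃ i, U i) = Set.univ →
      ¬ (∀ i, DomOn (WithLoops E) (d + 1) (U i)) := by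
  classical
  intro t U ht hcov hall
  have hasym : ∀ x y, E x y → E y x → False := by
    intro x y h1 h2
    by_cases h : x = y
    · subst h; exact hT.1 _ h1
    · exact (hT.2 x y h).1 h1 h2
  have hsink : ∀ i, ∃ w, ∀ u ∈ U i, ¬ E w u ∧ (u = w ∨ E u w) := by
    intro i
    by_cases hne : (U i).Nonempty
    · by_contra hcon
      push Not at hcon
      have hns : ∀ w ∈ U i, ∃ u ∈ U i, E w u := by
        intro w _
        obtain ⟨u, hu, h⟩ := hcon w
        refine ⟨u, hu, ?_⟩
        by_contra hwu
        obtain ⟨h1, h2⟩ := h hwu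
        exact h2 ((hT.2 u w h1).2 hwu)
      have hD := aux_sink d E hT (U i) (hall i) hns
      by_cases hu : U i = Set.univ
      · exact aux_univ d hd E hT hdom hcrit (hu ▸ hall i)
      · exact hcrit _ hne hu hD
    · have v : V := Classical.arbitrary V
      exact ⟨v, fun u hu => (hne ⟨u, hu⟩).elim⟩
  choose f hf using hsink
  have hmem : ∀ v, ∃ i, v ∈ U i := fun v => Set.mem_iUnion.1 (hcov ▸ Set.mem_univ v)
  have v0 : V := Classical.arbitrary V
  obtain ⟨i0, -⟩ := hmem v0
  obtain ⟨v, -, hv⟩ := hdom (Finset.univ.image f) (Set.subset_univ _)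
    ⟨f i0, Finset.mem_image_of_mem _ (Finset.mem_univ _)⟩
    (Finset.card_image_le.trans (by simpa using ht))
  obtain ⟨i, hi⟩ := hmem v
  exact (hf i v hi).1 (hv _ (Finset.mem_image_of_mem _ (Finset.mem_univ _)))
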